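/- If G is a finite B_pp-group and N is a normal subgroup of G, then the quotient group G/N is a B_pp-group. -/

import Mathlib

/-- An element of a group is a `pp`-element if its order is a prime power. -/
def IsPPElement {G : Type*} [Group G] (g : G) : Prop := IsPrimePow (orderOf g)

/-- A subset `X` of a group `G` is independent if `⟨Y, Φ(G)⟩ ≠ ⟨X, Φ(G)⟩` for every
proper subset `Y` of `X`. -/
def IsIndependent (G : Type*) [Group G] (X : Set G) : Prop :=
  ∀ Y : Set G, Y ⊂ X → Subgroup.closure Y ⊔ frattini G ≠ Subgroup.closure X ⊔ frattini G

/-- A `pp`-base of `G` is an independent generating set all of whose elements are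
`pp`-elements. -/
def IsPPBase (G : Type*) [Group G] (X : Set G) : Prop :=
  IsIndependent G X ∧ (∀ x ∈ X, IsPPElement x) ∧ Subgroup.closure X = ⊤

/-- A group is a `B_pp`-group if every two `pp`-bases have the same cardinality. -/
def IsBpp (G : Type*) [Group G] : Prop :=
  ∀ X Y : Set G, IsPPBase G X → IsPPBase G Y → X.ncard = Y.ncard

theorem mem_closure_pp {G : Type*} [Group G] [Finite G] (N : Subgroup G) (n : ℕ) :
    ∀ g ∈ N, orderOf g = n → g ∈ Subgroup.closure {h | h ∈ N ∧ IsPPElement h} := by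
  induction n using Nat.recOnPosPrimePosCoprime with
  | prime_pow p k hp hk =>
    intro g hg ho
    refine Subgroup.subset_closure ⟨hg, ?_⟩
    unfold IsPPElement
    rw [ho]
    exact hp.isPrimePow.pow hk.ne'
  | zero =>
    intro g hg ho
    exact absurd ho (orderOf_pos g).ne'
  | one =>
    intro g hg ho
    rw [orderOf_eq_one_iff.mp ho]
    exact one_mem _
  | coprime a b ha hb hab iha ihb =>
    intro g hg ho
    have h1 : orderOf (g ^ a) = b := by
      rw [orderOf_pow_of_dvd (by omega) (ho ▸ Dvd.intro _ rfl), ho]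
      exact Nat.mul_div_cancel_left _ (by omega)
    have h2 : orderOf (g ^ b) = a := by
      rw [orderOf_pow_of_dvd (by omega) (ho ▸ Dvd.intro_left _ rfl), ho]
      exact Nat.mul_div_cancel _ (by omega)
    have m1 := ihb _ (N.pow_mem hg a) h1
    have m2 := iha _ (N.pow_mem hg b) h2
    have key : g = (g ^ a) ^ (Nat.gcdA a b) * (g ^ b) ^ (Nat.gcdB a b) := by
      have := Nat.gcd_eq_gcd_ab a b
      rw [Nat.Coprime.gcd_eq_one hab] at this
      rw [← zpow_natCast, ← zpow_natCast, ← zpow_mul, ← zpow_mul, ← zpow_add, ← this]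
      simp
    rw [key]
    exact mul_mem (Subgroup.zpow_mem _ m1 _) (Subgroup.zpow_mem _ m2 _)

theorem exists_pp_lift {G K : Type*} [Group G] [Finite G] [Group K] (f : G →* K)
    (H : Subgroup G) (h : G) (hh : h ∈ H) (hp : IsPPElement (f h)) :
    ∃ g ∈ H, f g = f h ∧ IsPPElement g := by
  obtain ⟨p, k, hpp, hk, hpk⟩ := (isPrimePow_nat_iff _).mp hp
  obtain ⟨a, m, hm, ho⟩ :=
    Nat.exists_eq_pow_mul_and_not_dvd (orderOf_pos h).ne' p hpp.ne_one
  have hc : Nat.Coprime m (p ^ k) :=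
    (Nat.Coprime.pow_left k ((Nat.Prime.coprime_iff_not_dvd hpp).mpr hm)).symm
  have hfg : f (h ^ ((m : ℤ) * Nat.gcdA m (p ^ k))) = f h := by
    have e := Nat.gcd_eq_gcd_ab m (p ^ k)
    rw [hc.gcd_eq_one] at e
    have e2 : (m : ℤ) * Nat.gcdA m (p ^ k) = 1 - (orderOf (f h) : ℤ) * Nat.gcdB m (p ^ k) := by
      rw [← hpk]; push_cast at e ⊢; linarith
    rw [map_zpow, e2, zpow_sub, zpow_mul, zpow_natCast, pow_orderOf_eq_one]
    simp
  refine ⟨_, H.zpow_mem hh ((m : ℤ) * Nat.gcdA m (p ^ k)), hfg, ?_⟩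
  have hd : orderOf (h ^ ((m : ℤ) * Nat.gcdA m (p ^ k))) ∣ p ^ a := by
    apply orderOf_dvd_of_pow_eq_one
    rw [← zpow_natCast, ← zpow_mul]
    have : (m : ℤ) * Nat.gcdA m (p ^ k) * ((p ^ a : ℕ) : ℤ)
        = (orderOf h : ℤ) * Nat.gcdA m (p ^ k) := by
      rw [ho]; push_cast; ring
    rw [this, zpow_mul, zpow_natCast, pow_orderOf_eq_one, one_zpow]
  obtain ⟨j, hj, hj2⟩ := (Nat.dvd_prime_pow hpp).mp hd
  refine (isPrimePow_nat_iff _).mpr ⟨p, j, hpp, ?_, hj2.symm⟩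
  rcases Nat.eq_zero_or_pos j with h0 | h0
  · exfalso
    rw [h0, pow_zero, orderOf_eq_one_iff] at hj2
    rw [hj2, map_one] at hfg
    rw [IsPPElement, ← hfg, orderOf_one] at hp
    exact not_isPrimePow_one hp
  · exact h0

theorem exists_base {G : Type*} [Group G] [Finite G] (N : Subgroup G) [N.Normal]
    (H : Subgroup G) (hH : H ⊔ N = ⊤) (hmin : ∀ L : Subgroup G, L ≤ H → L ⊔ N = ⊤ → L = H)
    (T : Set G) (hTN : T ⊆ N) (hTp : ∀ t ∈ T, IsPPElement t)
    (hT : H ⊔ Subgroup.closure T = ⊤)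
    (hTmin : ∀ S, S ⊆ T → H ⊔ Subgroup.closure S = ⊤ → S = T)
    (X : Set (G ⧸ N)) (hX : IsPPBase (G ⧸ N) X) :
    ∃ B : Set G, IsPPBase G B ∧ B.ncard = X.ncard + T.ncard := by
  obtain ⟨hXi, hXp, hXg⟩ := hX
  have hlift : ∀ x : G ⧸ N, ∃ g : G, x ∈ X → g ∈ H ∧ (g : G ⧸ N) = x ∧ IsPPElement g := by
    intro x
    by_cases hx : x ∈ X
    · obtain ⟨y, rfl⟩ := QuotientGroup.mk_surjective x
      have hy : y ∈ H ⊔ N := hH ▸ Subgroup.mem_top y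
      obtain ⟨h, hh, n, hn, rfl⟩ := Subgroup.mem_sup_of_normal_right.mp hy
      have e : ((h * n : G) : G ⧸ N) = (h : G ⧸ N) := by
        rw [eq_comm, QuotientGroup.eq]; simpa using hn
      have hp := hXp _ hx
      rw [e] at hp
      obtain ⟨g, hg, h1, h2⟩ := exists_pp_lift (QuotientGroup.mk' N) H h hh hp
      exact ⟨g, fun _ => ⟨hg, by rw [e]; exact h1, h2⟩⟩
    · exact ⟨1, fun h => absurd h hx⟩
  choose s hs using hlift
  have hinj : Set.InjOn s X := by
    intro a ha b hb hab
    rw [← (hs a ha).2.1, ← (hs b hb).2.1, hab]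
  have himg : QuotientGroup.mk' N '' (s '' X) = X := by
    rw [Set.image_image]
    ext x
    constructor
    · rintro ⟨y, hy, rfl⟩
      have := (hs y hy).2.1
      simpa [this] using hy
    · intro hx
      exact ⟨x, hx, (hs x hx).2.1⟩
  have hsup : ∀ L : Subgroup G, L.map (QuotientGroup.mk' N) = ⊤ → L ⊔ N = ⊤ := by
    intro L hL
    have := congrArg (Subgroup.comap (QuotientGroup.mk' N)) hL
    rw [Subgroup.comap_map_eq, QuotientGroup.ker_mk', Subgroup.comap_top] at this
    exact this
  have hcl : Subgroup.closure (s '' X) = H := by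
    apply hmin
    · rw [Subgroup.closure_le]
      rintro _ ⟨x, hx, rfl⟩
      exact (hs x hx).1
    · apply hsup
      rw [MonoidHom.map_closure, himg, hXg]
  have hXne : ∀ x ∈ X, x ≠ 1 := by
    rintro x hx rfl
    have := hXp _ hx
    rw [IsPPElement, orderOf_one] at this
    exact not_isPrimePow_one this
  have hdisj : Disjoint (s '' X) T := by
    rw [Set.disjoint_left]
    rintro _ ⟨x, hx, rfl⟩ hxT
    apply hXne x hx
    rw [← (hs x hx).2.1]
    exact (QuotientGroup.eq_one_iff _).mpr (hTN hxT)
  have hgen : Subgroup.closure (s '' X ∪ T) = ⊤ := by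
    rw [Subgroup.closure_union, hcl, hT]
  refine ⟨s '' X ∪ T, ⟨?_, ?_, hgen⟩, ?_⟩
  · intro Y hY hc
    rw [hgen, top_sup_eq] at hc
    have hYtop : Subgroup.closure Y = ⊤ := frattini_nongenerating hc
    obtain ⟨hsub, z, hz, hzY⟩ := Set.ssubset_iff_exists.mp hY
    rcases hz with ⟨x, hx, rfl⟩ | hzT
    · apply hXi (X \ {x}) ⟨Set.diff_subset, fun h => (h hx).2 rfl⟩
      have : Subgroup.closure (X \ {x}) = ⊤ := by
        rw [eq_top_iff, ← Subgroup.map_top_of_surjective (QuotientGroup.mk' N)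
          (QuotientGroup.mk'_surjective N), ← hYtop, MonoidHom.map_closure, Subgroup.closure_le]
        rintro _ ⟨y, hy, rfl⟩
        rcases hsub hy with ⟨x', hx', rfl⟩ | hyT
        · apply Subgroup.subset_closure
          have e := (hs x' hx').2.1
          simp only [QuotientGroup.mk'_apply, e]
          refine ⟨hx', ?_⟩
          rintro rfl
          exact hzY hy
        · have : QuotientGroup.mk' N y = 1 := (QuotientGroup.eq_one_iff _).mpr (hTN hyT)
          rw [this]
          exact one_mem _
      rw [this, hXg]
    · have := hTmin (T \ {z}) Set.diff_subset (by
        rw [eq_top_iff, ← hYtop, ← hcl, ← Subgroup.closure_union]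
        apply Subgroup.closure_mono
        intro y hy
        rcases hsub hy with h | h
        · exact Or.inl h
        · exact Or.inr ⟨h, fun e => hzY (by rwa [← Set.mem_singleton_iff.mp e])⟩)
      rw [← this] at hzT
      exact hzT.2 rfl
  · rintro _ (⟨x, hx, rfl⟩ | h)
    · exact (hs x hx).2.2
    · exact hTp _ h
  · rw [Set.ncard_union_eq hdisj (Set.toFinite _) (Set.toFinite _), Set.ncard_image_of_injOn hinj]

/-- Every quotient of a finite `B_pp`-group is a `B_pp`-group. -/
theorem isBpp_quotient (G : Type*) [Group G] [Finite G] (hG : IsBpp G)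
    (N : Subgroup G) [N.Normal] : IsBpp (G ⧸ N) := by
  obtain ⟨H, hH⟩ := (Set.toFinite {L : Subgroup G | L ⊔ N = ⊤}).exists_minimal
    ⟨⊤, top_sup_eq _⟩
  obtain ⟨T, hT⟩ := (Set.toFinite {T : Set G | T ⊆ {h | h ∈ N ∧ IsPPElement h} ∧
    H ⊔ Subgroup.closure T = ⊤}).exists_minimal ⟨{h | h ∈ N ∧ IsPPElement h}, subset_rfl, by
      rw [eq_top_iff, ← show H ⊔ N = ⊤ from hH.prop]
      exact sup_le_sup_left (fun g hg => mem_closure_pp N _ g hg rfl) _⟩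
  have key := exists_base N H hH.prop
    (fun L hL h => le_antisymm hL (hH.le_of_le h hL)) T
    (fun t ht => (hT.prop.1 ht).1) (fun t ht => (hT.prop.1 ht).2) hT.prop.2
    (fun S hS h => le_antisymm hS (hT.le_of_le ⟨hS.trans hT.prop.1, h⟩ hS))
  intro X Y hX hY
  obtain ⟨B, hB, hBc⟩ := key X hX
  obtain ⟨C, hC, hCc⟩ := key Y hY
  have := hG B C hB hC
  omega
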